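/- arXiv:2204.09512 — 4 statements merged into one kernel-verified Lean document; each statement's English description precedes it below -/
import Mathlib

section
/- Let 𝐊 be a class of T0 topological spaces (whose members are called 𝐊-spaces) such that every sober space is a 𝐊-space and any space homeomorphic to a 𝐊-space is a 𝐊-space. Let X be a T0 space and A a closed subset of X, equipped with the subspace topology. Then every subset of A that is a closed 𝐊-set of the space A is a closed 𝐊-set of X; that is, 𝐊(A) ⊆ 𝐊(X). -/
universe u v

open Set

/-- The specialization order on a topological space: `specLE x y` iff `x ∈ closure {y}`. -/
def specLE {X : Type*} [TopologicalSpace X] (x y : X) : Prop :=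
  x ∈ closure ({y} : Set X)

/-- `a` is an upper bound of `D` with respect to the specialization order. -/
def specUB {X : Type*} [TopologicalSpace X] (D : Set X) (a : X) : Prop :=
  ∀ d ∈ D, specLE d a

/-- `a` is a least upper bound of `D` with respect to the specialization order. -/
def specLUB {X : Type*} [TopologicalSpace X] (D : Set X) (a : X) : Prop :=
  specUB D a ∧ ∀ b, specUB D b → specLE a b

/-- `U` is Scott open with respect to the specialization order. -/
def ScottOpenSpec {X : Type*} [TopologicalSpace X] (U : Set X) : Prop :=
  (∀ x y, specLE x y → x ∈ U → y ∈ U) ∧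
  ∀ D : Set X, D.Nonempty → DirectedOn specLE D → ∀ a, specLUB D a → a ∈ U →
    (D ∩ U).Nonempty

/-- A d-space (monotone convergence space): a T0 space which is a dcpo in its
specialization order and in which every open set is Scott open with respect to
the specialization order. -/
def DSpace (X : Type*) [TopologicalSpace X] : Prop :=
  T0Space X ∧
  (∀ D : Set X, D.Nonempty → DirectedOn specLE D → ∃ a, specLUB D a) ∧
  (∀ U : Set X, IsOpen U → ScottOpenSpec U)

/-- A set is saturated if it is an intersection of open sets. -/
def Saturated {X : Type*} [TopologicalSpace X] (A : Set X) : Prop :=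
  ∃ 𝒰 : Set (Set X), (∀ U ∈ 𝒰, IsOpen U) ∧ A = ⋂₀ 𝒰

/-- A T0 space is well-filtered if every filtered (under reverse inclusion) family of
nonempty compact saturated sets whose intersection is contained in an open set `U`
has a member contained in `U`. -/
def WellFiltered (X : Type*) [TopologicalSpace X] : Prop :=
  T0Space X ∧
  ∀ 𝒦 : Set (Set X), 𝒦.Nonempty →
    (∀ K ∈ 𝒦, K.Nonempty ∧ IsCompact K ∧ Saturated K) →
    DirectedOn (fun A B => B ⊆ A) 𝒦 →
    ∀ U : Set X, IsOpen U → ⋂₀ 𝒦 ⊆ U → ∃ K ∈ 𝒦, K ⊆ U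

/-- A nonempty closed set which is irreducible. -/
def IrredClosed {X : Type*} [TopologicalSpace X] (A : Set X) : Prop :=
  A.Nonempty ∧ IsClosed A ∧
  ∀ F₁ F₂ : Set X, IsClosed F₁ → IsClosed F₂ → A ⊆ F₁ ∪ F₂ → (A ⊆ F₁ ∨ A ⊆ F₂)

/-- A space is sober if every irreducible closed set is the closure of a unique point. -/
def Sober (X : Type*) [TopologicalSpace X] : Prop :=
  ∀ A : Set X, IrredClosed A → ∃! x : X, A = closure ({x} : Set X)

/-- The specialization preorder on a topological space. -/
def specPreorder (Y : Type*) [TopologicalSpace Y] : Preorder Y where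
  le := specLE
  le_refl x := subset_closure rfl
  le_trans x y z hxy hyz :=
    closure_minimal (Set.singleton_subset_iff.mpr hyz) isClosed_closure hxy

/-- A Scott open subset of a poset: an upper set inaccessible by suprema of directed sets. -/
def IsScottOpen {P : Type*} [Preorder P] (U : Set P) : Prop :=
  IsUpperSet U ∧
  ∀ D : Set P, D.Nonempty → DirectedOn (· ≤ ·) D → ∀ a, IsLUB D a → a ∈ U →
    (D ∩ U).Nonempty

/-- The Scott topology on a poset. `Σ P` is `P` equipped with `scottTop P`. -/
def scottTop (P : Type*) [Preorder P] : TopologicalSpace P where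
  IsOpen := IsScottOpen
  isOpen_univ := by
    refine ⟨isUpperSet_univ, fun D hD _ _ _ _ => ?_⟩
    obtain ⟨d, hd⟩ := hD
    exact ⟨d, hd, trivial⟩
  isOpen_inter := by
    rintro U V ⟨hU1, hU2⟩ ⟨hV1, hV2⟩
    refine ⟨hU1.inter hV1, ?_⟩
    rintro D hne hdir a ha ⟨haU, haV⟩
    obtain ⟨d1, hd1D, hd1U⟩ := hU2 D hne hdir a ha haU
    obtain ⟨d2, hd2D, hd2V⟩ := hV2 D hne hdir a ha haV
    obtain ⟨d3, hd3D, h13, h23⟩ := hdir d1 hd1D d2 hd2D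
    exact ⟨d3, hd3D, hU1 h13 hd1U, hV1 h23 hd2V⟩
  isOpen_sUnion := by
    intro S hS
    refine ⟨isUpperSet_sUnion fun s hs => (hS s hs).1, ?_⟩
    rintro D hne hdir a ha ⟨U, hUS, haU⟩
    obtain ⟨d, hdD, hdU⟩ := (hS U hUS).2 D hne hdir a ha haU
    exact ⟨d, hdD, U, hUS, hdU⟩

/-- A dcpo: every nonempty directed subset has a least upper bound. -/
def IsDcpo (P : Type*) [Preorder P] : Prop :=
  ∀ D : Set P, D.Nonempty → DirectedOn (· ≤ ·) D → ∃ a, IsLUB D a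

/-- The way-below relation. -/
def wayBelow {P : Type*} [Preorder P] (x y : P) : Prop :=
  ∀ D : Set P, D.Nonempty → DirectedOn (· ≤ ·) D → ∀ a, IsLUB D a → y ≤ a →
    ∃ d ∈ D, x ≤ d

/-- A poset is Noetherian if every (nonempty) directed subset has a greatest member. -/
def Noetherian (P : Type*) [Preorder P] : Prop :=
  ∀ D : Set P, D.Nonempty → DirectedOn (· ≤ ·) D → ∃ m ∈ D, ∀ d ∈ D, d ≤ m

/-- An ideal: a (nonempty) directed lower set. -/
def IsIdealSet {P : Type*} [Preorder P] (I : Set P) : Prop :=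
  I.Nonempty ∧ DirectedOn (· ≤ ·) I ∧ IsLowerSet I

/-- The Alexandroff topology on a poset: the open sets are the upper sets. -/
def alexTop (P : Type*) [Preorder P] : TopologicalSpace P where
  IsOpen := IsUpperSet
  isOpen_univ := isUpperSet_univ
  isOpen_inter _ _ := IsUpperSet.inter
  isOpen_sUnion _ h := isUpperSet_sUnion h

/-- The space `X_⊤` obtained from `X` by adjoining a new top point `⊤` (here `none`):
the closed sets are the closed sets of `X` together with the whole space. -/
def topTop (X : Type*) [TopologicalSpace X] : TopologicalSpace (Option X) where
  IsOpen V := V = ∅ ∨ ∃ U : Set X, IsOpen U ∧ V = insert none (some '' U)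
  isOpen_univ := by
    refine Or.inr ⟨Set.univ, isOpen_univ, ?_⟩
    ext (_ | a) <;> simp
  isOpen_inter := by
    rintro V W (rfl | ⟨U₁, hU₁, rfl⟩) hW
    · exact Or.inl (by simp)
    rcases hW with rfl | ⟨U₂, hU₂, rfl⟩
    · exact Or.inl (by simp)
    · refine Or.inr ⟨U₁ ∩ U₂, hU₁.inter hU₂, ?_⟩
      ext (_ | a) <;> simp
  isOpen_sUnion := by
    classical
    intro S hS
    by_cases h0 : ⋃₀ S = ∅
    · exact Or.inl h0
    · refine Or.inr ⟨{x : X | some x ∈ ⋃₀ S}, ?_, ?_⟩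
      · have h1 : {x : X | some x ∈ ⋃₀ S} = ⋃ V ∈ S, some ⁻¹' V := by
          ext x; simp [Set.mem_sUnion]
        rw [h1]
        refine isOpen_biUnion fun V hV => ?_
        rcases hS V hV with rfl | ⟨U, hU, rfl⟩
        · rw [Set.preimage_empty]; exact isOpen_empty
        · have h2 : (some ⁻¹' (insert none (some '' U)) : Set X) = U := by
            ext x; simp
          rw [h2]; exact hU
      · have hnone : (none : Option X) ∈ ⋃₀ S := by
          obtain ⟨v, V, hVS, hvV⟩ := Set.nonempty_iff_ne_empty.mpr h0
          rcases hS V hVS with rfl | ⟨U, hU, rfl⟩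
          · exact absurd hvV (by simp)
          · exact ⟨_, hVS, by simp⟩
        ext (_ | a)
        · simp only [Set.mem_insert_iff, true_or, iff_true]
          exact hnone
        · simp [Set.mem_sUnion]

/-- A `𝐊`-set of a space `X` (relative to a class `K` of spaces): a set whose image
under any continuous map to a `𝐊`-space has the closure of a unique point as closure. -/
def IsKSet (K : (Y : Type u) → TopologicalSpace Y → Prop)
    (X : Type u) [tX : TopologicalSpace X] (A : Set X) : Prop :=
  ∀ (Y : Type u) (tY : TopologicalSpace Y), K Y tY →
    ∀ f : X → Y, @Continuous X Y tX tY f →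
      ∃! y : Y, @closure Y tY (f '' A) = @closure Y tY {y}

/-- `𝐊(X)`: the collection of closed `𝐊`-sets of `X`. -/
def KSets (K : (Y : Type u) → TopologicalSpace Y → Prop)
    (X : Type u) [TopologicalSpace X] : Set (Set X) :=
  {A : Set X | IsClosed A ∧ IsKSet K X A}

/-- The lower Vietoris topology on a family `G` of subsets of `X`, generated by the
sets `◊U = {A ∈ G | A ∩ U ≠ ∅}` for `U` open. -/
def lowerVietoris {X : Type*} [TopologicalSpace X] (G : Set (Set X)) :
    TopologicalSpace ↥G :=
  TopologicalSpace.generateFrom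
    {S : Set ↥G | ∃ U : Set X, IsOpen U ∧ S = {A : ↥G | ((A : Set X) ∩ U).Nonempty}}

/-- A class `K` of spaces is adequate if `P_H(𝐊(X))` is a `𝐊`-space for every T0 space `X`. -/
def Adequate (K : (Y : Type u) → TopologicalSpace Y → Prop) : Prop :=
  ∀ (X : Type u) (tX : TopologicalSpace X), @T0Space X tX →
    K ↥(@KSets K X tX) (@lowerVietoris X tX (@KSets K X tX))

/-- `⟨Z, η⟩` is a `𝐊`-reflection of `X`. -/
def IsKReflection (K : (Y : Type u) → TopologicalSpace Y → Prop)
    (X : Type u) (tX : TopologicalSpace X)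
    (Z : Type u) (tZ : TopologicalSpace Z) (η : X → Z) : Prop :=
  K Z tZ ∧ @Continuous X Z tX tZ η ∧
  ∀ (Y : Type u) (tY : TopologicalSpace Y), K Y tY →
    ∀ f : X → Y, @Continuous X Y tX tY f →
      ∃! g : Z → Y, @Continuous Z Y tZ tY g ∧ g ∘ η = f

/-- The carrier of the Johnstone poset `𝕁 = ℕ × (ℕ ∪ {ω})`. -/
structure Johnstone where
  fst : ℕ
  snd : WithTop ℕ

/-- The Johnstone order: `(j, k) ≤ (m, n)` iff `j = m` and `k ≤ n`, or `n = ω` and `k ≤ m`. -/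
instance : PartialOrder Johnstone where
  le p q := (p.fst = q.fst ∧ p.snd ≤ q.snd) ∨ (q.snd = ⊤ ∧ p.snd ≤ (q.fst : WithTop ℕ))
  le_refl p := Or.inl ⟨rfl, le_rfl⟩
  le_trans p q r hpq hqr := by
    rcases hpq with ⟨h1, h2⟩ | ⟨h1, h2⟩ <;> rcases hqr with ⟨h3, h4⟩ | ⟨h3, h4⟩
    · exact Or.inl ⟨h1.trans h3, h2.trans h4⟩
    · exact Or.inr ⟨h3, h2.trans h4⟩
    · have hr : r.snd = ⊤ := top_le_iff.mp (h1 ▸ h4)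
      exact Or.inr ⟨hr, h3 ▸ h2⟩
    · rw [h1] at h4
      exact absurd h4 (by simp)
  le_antisymm p q hpq hqp := by
    obtain ⟨pf, ps⟩ := p
    obtain ⟨qf, qs⟩ := q
    rcases hpq with ⟨h1, h2⟩ | ⟨h1, h2⟩ <;> rcases hqp with ⟨h3, h4⟩ | ⟨h3, h4⟩
    · dsimp at *
      cases h1
      cases le_antisymm h2 h4
      rfl
    · dsimp at *
      rw [h3] at h2
      rw [top_le_iff.mp h2] at h4
      exact absurd h4 (by simp)
    · dsimp at *
      rw [h1] at h4
      rw [top_le_iff.mp h4] at h2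
      exact absurd h2 (by simp)
    · dsimp at *
      rw [h3] at h2
      exact absurd h2 (by simp)

/-- The class of d-spaces. -/
def dClass : (Y : Type u) → TopologicalSpace Y → Prop := fun Y tY => @DSpace Y tY

/-- The class of well-filtered spaces. -/
def wfClass : (Y : Type u) → TopologicalSpace Y → Prop := fun Y tY => @WellFiltered Y tY

/-- The class of sober spaces. -/
def soberClass : (Y : Type u) → TopologicalSpace Y → Prop := fun Y tY => @Sober Y tY

section ImageOfKSets

variable {K : (Y : Type u) → TopologicalSpace Y → Prop} {X Z : Type u}
  [TopologicalSpace X] [TopologicalSpace Z] {B : Set X} {g : X → Z}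

theorem IsKSet.image (hB : IsKSet K X B) (hg : Continuous g) : IsKSet K Z (g '' B) := by
  intro Y tY hY f hf
  rw [← image_comp]
  exact hB Y tY hY (f ∘ g) (hf.comp hg)

theorem stmt0_general (hB : B ∈ KSets K X) (hg : Continuous g) (hg_closed : IsClosedMap g) :
    g '' B ∈ KSets K Z :=
  ⟨hg_closed B hB.1, hB.2.image hg⟩

end ImageOfKSets

/-- For a class `K` of T0 spaces containing all sober spaces and closed
under homeomorphisms, and a closed subspace `A` of a T0 space `X`, every closed
`𝐊`-set of `A` is a closed `𝐊`-set of `X`, i.e. `𝐊(A) ⊆ 𝐊(X)`. -/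
theorem stmt0
    (K : (Y : Type u) → TopologicalSpace Y → Prop)
    (hT0 : ∀ (Y : Type u) (tY : TopologicalSpace Y), K Y tY → @T0Space Y tY)
    (hSober : ∀ (Y : Type u) (tY : TopologicalSpace Y), @Sober Y tY → K Y tY)
    (hHomeo : ∀ (Y : Type u) (tY : TopologicalSpace Y) (Z : Type u) (tZ : TopologicalSpace Z),
      K Y tY → Nonempty (@Homeomorph Y Z tY tZ) → K Z tZ)
    (X : Type u) [TopologicalSpace X] [T0Space X]
    (A : Set X) (hA : IsClosed A)
    (B : Set ↥A) (hB : B ∈ KSets K ↥A) :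
    (Subtype.val '' B) ∈ KSets K X :=
  stmt0_general hB continuous_subtype_val hA.isClosedMap_subtype_val
end

section
/- For a T0 topological space X, let X_⊤ be the space obtained from X by adjoining a new point ⊤, whose closed sets are exactly the closed sets of X together with the whole set X ∪ {⊤}. Then: (a) X is well-filtered if and only if X_⊤ is well-filtered; (b) X is a d-space if and only if X_⊤ is a d-space. -/
universe u v

open Set

/-!
`X` is a closed subspace of `X_⊤`, and both properties pass to closed subspaces. Conversely, `⊤`
lies in every nonempty saturated set of `X_⊤`, so a filtered family of such sets is controlled by
its traces on `X`. A d-space is a T0 space in which the closure of every directed set has a generic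
point; in `X_⊤` that point is `⊤` if the directed set contains `⊤`, and otherwise it lies in `X`.
-/

open Topology

section

variable {X Y : Type*} [TopologicalSpace X] [TopologicalSpace Y] {f : X → Y}

theorem specLE_iff_specializes {x y : X} : specLE x y ↔ y ⤳ x :=
  specializes_iff_mem_closure.symm

theorem directedOn_specLE_image (hf : IsInducing f) {D : Set X} :
    DirectedOn specLE (f '' D) ↔ DirectedOn specLE D := by
  rw [directedOn_image]
  simp only [DirectedOn, Order.Preimage, specLE_iff_specializes, hf.specializes_iff]

theorem isGenericPoint_closure_image_iff (hf : IsClosedEmbedding f) {D : Set X} {x : X} :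
    IsGenericPoint (f x) (closure (f '' D)) ↔ IsGenericPoint x (closure D) := by
  rw [IsGenericPoint, IsGenericPoint, ← image_singleton, hf.closure_image_eq,
    hf.closure_image_eq, hf.injective.image_injective.eq_iff]

theorem specUB_iff_closure_subset {D : Set X} {a : X} :
    specUB D a ↔ closure D ⊆ closure {a} :=
  isClosed_closure.closure_subset_iff.symm

theorem specLUB_of_isGenericPoint {D : Set X} {a : X} (ha : IsGenericPoint a (closure D)) :
    specLUB D a :=
  ⟨specUB_iff_closure_subset.2 ha.def.ge,
    fun _ hb => specUB_iff_closure_subset.1 hb ha.mem⟩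

theorem dSpace_iff_exists_isGenericPoint :
    DSpace X ↔ T0Space X ∧ ∀ D : Set X, D.Nonempty → DirectedOn specLE D →
      ∃ a, IsGenericPoint a (closure D) := by
  refine and_congr_right fun _ => ⟨fun ⟨hlub, hscott⟩ D hne hdir => ?_, fun hgen => ⟨?_, ?_⟩⟩
  · obtain ⟨a, ha⟩ := hlub D hne hdir
    have ha_mem : a ∈ closure D := mem_closure_iff.2 fun U hU haU =>
      inter_comm D U ▸ (hscott U hU).2 D hne hdir a ha haU
    exact ⟨a, (closure_minimal (singleton_subset_iff.2 ha_mem) isClosed_closure).antisymm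
      (specUB_iff_closure_subset.1 ha.1)⟩
  · exact fun D hne hdir => (hgen D hne hdir).imp fun _ => specLUB_of_isGenericPoint
  · refine fun U hU => ⟨fun x y hxy => (specLE_iff_specializes.1 hxy).mem_open hU,
      fun D hne hdir a ha haU => ?_⟩
    obtain ⟨b, hb⟩ := hgen D hne hdir
    have hab : b ⤳ a := specLE_iff_specializes.1 (ha.2 b (specLUB_of_isGenericPoint hb).1)
    exact inter_comm U D ▸ mem_closure_iff.1 hb.mem U hU (hab.mem_open hU haU)

theorem DSpace.of_isClosedEmbedding (hY : DSpace Y) (hf : IsClosedEmbedding f) : DSpace X := by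
  rw [dSpace_iff_exists_isGenericPoint] at hY ⊢
  obtain ⟨_, hgen⟩ := hY
  refine ⟨hf.isEmbedding.t0Space, fun D hne hdir => ?_⟩
  obtain ⟨b, hb⟩ := hgen (f '' D) (hne.image f) ((directedOn_specLE_image hf.isInducing).2 hdir)
  obtain ⟨a, -, rfl⟩ : b ∈ f '' closure D := hf.closure_image_eq D ▸ hb.mem
  exact ⟨a, (isGenericPoint_closure_image_iff hf).1 hb⟩

theorem saturated_nhdsKer (A : Set X) : Saturated (nhdsKer A) :=
  ⟨{U | IsOpen U ∧ A ⊆ U}, fun _ hU => hU.1, nhdsKer_def A⟩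

theorem Saturated.mem_of_specializes {A : Set X} (hA : Saturated A) {x y : X} (h : x ⤳ y)
    (hy : y ∈ A) : x ∈ A := by
  obtain ⟨𝒰, h𝒰, rfl⟩ := hA
  exact fun U hU => h.mem_open (h𝒰 U hU) (hy U hU)

theorem Saturated.preimage {A : Set Y} (hA : Saturated A) (hf : Continuous f) :
    Saturated (f ⁻¹' A) := by
  obtain ⟨𝒰, h𝒰, rfl⟩ := hA
  refine ⟨Set.preimage f '' 𝒰, ?_, by rw [preimage_sInter, sInter_image]⟩
  rintro _ ⟨U, hU, rfl⟩
  exact (h𝒰 U hU).preimage hf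

theorem Saturated.preimage_nhdsKer_image_subset {A : Set X} (hA : Saturated A)
    (hf : IsInducing f) : f ⁻¹' nhdsKer (f '' A) ⊆ A := by
  intro x hx
  obtain ⟨_, ⟨a, ha, rfl⟩, hxa⟩ := mem_nhdsKer_iff_specializes.1 hx
  exact hA.mem_of_specializes (hf.specializes_iff.1 hxa) ha

theorem WellFiltered.of_isClosedEmbedding (hY : WellFiltered Y) (hf : IsClosedEmbedding f) :
    WellFiltered X := by
  obtain ⟨_, hY⟩ := hY
  refine ⟨hf.isEmbedding.t0Space, fun 𝒦 hne h𝒦 hdir U hU hsub => ?_⟩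
  -- The complement of the image of `Uᶜ` contains every point outside the range of `f`, so the
  -- inclusion has to be checked only at points of the form `f x`.
  have hsub' : ⋂₀ ((fun K => nhdsKer (f '' K)) '' 𝒦) ⊆ (f '' Uᶜ)ᶜ := by
    rintro _ hy ⟨x, hxU, rfl⟩
    refine hxU (hsub fun K hK => (h𝒦 K hK).2.2.preimage_nhdsKer_image_subset hf.isInducing ?_)
    exact hy _ (mem_image_of_mem _ hK)
  obtain ⟨_, ⟨K, hK, rfl⟩, hKU⟩ := hY _ (hne.image _)
    (by
      rintro _ ⟨K, hK, rfl⟩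
      obtain ⟨hK_ne, hK_compact, -⟩ := h𝒦 K hK
      exact ⟨(hK_ne.image f).mono subset_nhdsKer, (hK_compact.image hf.continuous).nhdsKer,
        saturated_nhdsKer _⟩)
    (hdir.mono_comp fun _ _ h => nhdsKer_mono (image_mono h))
    (f '' Uᶜ)ᶜ (hf.isClosedMap _ hU.isClosed_compl).isOpen_compl hsub'
  refine ⟨K, hK, fun x hx => by_contra fun hxU => ?_⟩
  exact hKU (subset_nhdsKer (mem_image_of_mem f hx)) (mem_image_of_mem f hxU)

theorem WellFiltered.exists_preimage_subset (hX : WellFiltered X) (hf : IsClosedEmbedding f)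
    {𝒦 : Set (Set Y)} (hne : 𝒦.Nonempty) (h𝒦 : ∀ K ∈ 𝒦, IsCompact K ∧ Saturated K)
    (hdir : DirectedOn (fun A B => B ⊆ A) 𝒦) {U : Set X} (hU : IsOpen U)
    (hsub : f ⁻¹' ⋂₀ 𝒦 ⊆ U) : ∃ K ∈ 𝒦, f ⁻¹' K ⊆ U := by
  by_cases hempty : ∃ K ∈ 𝒦, f ⁻¹' K = ∅
  · obtain ⟨K, hK, hK_empty⟩ := hempty
    exact ⟨K, hK, hK_empty ▸ empty_subset U⟩
  · push Not at hempty
    obtain ⟨_, ⟨K, hK, rfl⟩, hKU⟩ := hX.2 (preimage f '' 𝒦) (hne.image _)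
      (by
        rintro _ ⟨K, hK, rfl⟩
        exact ⟨hempty K hK, hf.isCompact_preimage (h𝒦 K hK).1,
          (h𝒦 K hK).2.preimage hf.continuous⟩)
      (hdir.mono_comp fun _ _ h => preimage_mono h) U hU
      (by rwa [sInter_image, ← preimage_sInter])
    exact ⟨K, hK, hKU⟩

end

section

variable {X : Type*} [TopologicalSpace X]

attribute [local instance] topTop

theorem isOpen_insert_none_image_some {U : Set X} (hU : IsOpen U) :
    IsOpen (insert none (some '' U)) :=
  Or.inr ⟨U, hU, rfl⟩

theorem none_specializes (y : Option X) : none ⤳ y := by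
  refine specializes_iff_forall_open.2 ?_
  rintro _ (rfl | ⟨U, -, rfl⟩) hy
  · exact hy
  · exact mem_insert none _

theorem continuous_some_topTop : Continuous (some : X → Option X) := by
  refine continuous_def.2 ?_
  rintro _ (rfl | ⟨U, hU, rfl⟩)
  · exact isOpen_empty
  · convert hU using 1
    ext x
    simp

theorem isClosedMap_some_topTop : IsClosedMap (some : X → Option X) := by
  refine fun C hC => ⟨?_⟩
  convert isOpen_insert_none_image_some hC.isOpen_compl using 1
  ext (_ | x) <;> simp

theorem isClosedEmbedding_some_topTop : IsClosedEmbedding (some : X → Option X) :=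
  .of_continuous_injective_isClosedMap continuous_some_topTop (Option.some_injective X)
    isClosedMap_some_topTop

theorem not_some_specializes_none (x : X) : ¬ some x ⤳ none := fun h => by
  have hclosed : IsClosed (range (some : X → Option X)) :=
    isClosedEmbedding_some_topTop.isClosed_range
  simpa using h.mem_closed hclosed (mem_range_self x)

theorem t0Space_topTop [T0Space X] : T0Space (Option X) where
  t0
    | none, none, _ => rfl
    | none, some y, h => absurd h.specializes' (not_some_specializes_none y)
    | some x, none, h => absurd h.specializes (not_some_specializes_none x)
    | some _, some _, h =>
      congrArg some (isClosedEmbedding_some_topTop.isInducing.inseparable_iff.1 h).eq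

theorem wellFiltered_topTop_iff : WellFiltered (Option X) ↔ WellFiltered X := by
  refine ⟨fun h => h.of_isClosedEmbedding isClosedEmbedding_some_topTop, fun hX => ?_⟩
  have := hX.1
  refine ⟨t0Space_topTop, fun 𝒦 hne h𝒦 hdir V hV hsub => ?_⟩
  have hnone : none ∈ V := hsub fun K hK =>
    have ⟨⟨y, hy⟩, _, hK_sat⟩ := h𝒦 K hK
    hK_sat.mem_of_specializes (none_specializes y) hy
  obtain ⟨K, hK, hKV⟩ := hX.exists_preimage_subset isClosedEmbedding_some_topTop hne
    (fun K hK => (h𝒦 K hK).2) hdir (hV.preimage continuous_some_topTop) (preimage_mono hsub)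
  exact ⟨K, hK, Option.forall.2 ⟨fun _ => hnone, fun _ hx => hKV hx⟩⟩

theorem dSpace_topTop_iff : DSpace (Option X) ↔ DSpace X := by
  refine ⟨fun h => h.of_isClosedEmbedding isClosedEmbedding_some_topTop, fun hX => ?_⟩
  rw [dSpace_iff_exists_isGenericPoint] at hX ⊢
  obtain ⟨_, hgen⟩ := hX
  refine ⟨t0Space_topTop, fun D hne hdir => ?_⟩
  by_cases hnone : none ∈ D
  · refine ⟨none, isGenericPoint_iff_specializes.2 fun y => iff_of_true (none_specializes y) ?_⟩
    exact (none_specializes y).mem_closed isClosed_closure (subset_closure hnone)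
  · obtain ⟨D, rfl⟩ : ∃ D' : Set X, some '' D' = D := subset_range_iff_exists_image_eq.1 <| by
      rwa [← compl_compl (range some), compl_range_some, subset_compl_singleton_iff]
    obtain ⟨a, ha⟩ := hgen D hne.of_image
      ((directedOn_specLE_image isClosedEmbedding_some_topTop.isInducing).1 hdir)
    exact ⟨some a, (isGenericPoint_closure_image_iff isClosedEmbedding_some_topTop).2 ha⟩

end

/-- For a T0 space `X`: (a) `X` is well-filtered iff `X_⊤` is well-filtered;
(b) `X` is a d-space iff `X_⊤` is a d-space. -/
theorem stmt3 (X : Type*) [TopologicalSpace X] [T0Space X] :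
    (WellFiltered X ↔ @WellFiltered (Option X) (topTop X)) ∧
    (DSpace X ↔ @DSpace (Option X) (topTop X)) :=
  ⟨wellFiltered_topTop_iff.symm, dSpace_topTop_iff.symm⟩
end

section
/- Let 𝐊 be a class of T0 topological spaces such that: every sober space is a 𝐊-space; any space homeomorphic to a 𝐊-space is a 𝐊-space; every 𝐊-space is a d-space; and 𝐊 is adequate. Let X be a 𝐊-space, Y a T0 space, and f, g : X → Y continuous maps. Then the equalizer E(f, g) = {x ∈ X : f(x) = g(x)}, equipped with the subspace topology, is a 𝐊-space. -/
universe u v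

open Set

/-!
For an adequate class `K`, sending a point to its closure embeds a T0 space `X` into
`P_H(K(X))`, so `X` is a `K`-space as soon as every closed `K`-set of `X` is a point closure.
If `A` is a closed `K`-set of the equalizer `E(f, g)`, the inclusion into the `K`-space `X` provides
a generic point `x` of the closure of `A` in `X`. Then `f x` and `g x` are generic points of the
closure of the same set `f(A) = g(A)`, so `f x = g x` since `Y` is T0. Thus `x` lies in `E(f, g)`,
where its closure is `A`.
-/

open Topology

section GenericPoint

variable {X Y : Type*} [TopologicalSpace X] [TopologicalSpace Y] {A : Set X} {x : X}

theorem isGenericPoint_closure_image_of_closure {f : X → Y} (hx : IsGenericPoint x (closure A))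
    (hf : Continuous f) : IsGenericPoint (f x) (closure (f '' A)) := by
  simpa only [closure_image_closure hf] using hx.image hf

theorem isGenericPoint_closure_of_isInducing {i : X → Y} (hi : IsInducing i)
    (hx : IsGenericPoint (i x) (closure (i '' A))) : IsGenericPoint x (closure A) := by
  rw [isGenericPoint_def, hi.closure_eq_preimage_closure_image, image_singleton, hx.def,
    ← hi.closure_eq_preimage_closure_image]

theorem eq_of_eqOn_of_isGenericPoint_closure [T0Space Y] {f g : X → Y} (hf : Continuous f)
    (hg : Continuous g) (hfg : A.EqOn f g) (hx : IsGenericPoint x (closure A)) : f x = g x := by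
  have hfx : IsGenericPoint (f x) (closure (f '' A)) :=
    isGenericPoint_closure_image_of_closure hx hf
  have hgx : IsGenericPoint (g x) (closure (f '' A)) :=
    hfg.image_eq ▸ isGenericPoint_closure_image_of_closure hx hg
  exact hfx.eq hgx

end GenericPoint

section LowerVietoris

/-- The lower Vietoris topology as the ambient topology on families of subsets; since `Set X`
carries no topology, there is no competing subspace topology. -/
local instance instTopologicalSpaceLowerVietoris {X : Type*} [TopologicalSpace X]
    (G : Set (Set X)) : TopologicalSpace G :=
  lowerVietoris G

section PointClosure

variable {X : Type*} [TopologicalSpace X] {G : Set (Set X)}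

/-- The canonical map `x ↦ closure {x}` from a space to a family of subsets containing all the point
closures; for the family of closed `K`-sets it is the candidate `K`-reflection map. -/
def pointClosure (hG : ∀ x : X, closure {x} ∈ G) (x : X) : G :=
  ⟨closure {x}, hG x⟩

theorem pointClosure_preimage_hit (hG : ∀ x : X, closure {x} ∈ G) {U : Set X} (hU : IsOpen U) :
    pointClosure hG ⁻¹' {A : G | ((A : Set X) ∩ U).Nonempty} = U := by
  ext x
  exact (closure_inter_open_nonempty_iff hU).trans singleton_inter_nonempty

theorem isInducing_pointClosure (hG : ∀ x : X, closure {x} ∈ G) :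
    IsInducing (pointClosure hG) where
  eq_induced := by
    change _ = TopologicalSpace.induced _ (TopologicalSpace.generateFrom _)
    rw [induced_generateFrom_eq]
    apply le_antisymm
    · apply le_generateFrom
      rintro _ ⟨_, ⟨U, hU, rfl⟩, rfl⟩
      rwa [pointClosure_preimage_hit hG hU]
    · intro U hU
      exact TopologicalSpace.isOpen_generateFrom_of_mem
        ⟨_, ⟨U, hU, rfl⟩, pointClosure_preimage_hit hG hU⟩

theorem pointClosure_surjective (hG : ∀ x : X, closure {x} ∈ G)
    (hgen : ∀ A ∈ G, ∃ x, IsGenericPoint x A) : Function.Surjective (pointClosure hG) := by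
  rintro ⟨A, hA⟩
  obtain ⟨x, hx⟩ := hgen A hA
  exact ⟨x, Subtype.ext hx⟩

/-- The identification of a T0 space with the hyperspace of its point closures, used to transport
membership in a homeomorphism-invariant class of spaces. -/
noncomputable def pointClosureHomeomorph [T0Space X] (hG : ∀ x : X, closure {x} ∈ G)
    (hgen : ∀ A ∈ G, ∃ x, IsGenericPoint x A) : X ≃ₜ G :=
  (isInducing_pointClosure hG).isEmbedding.toHomeomorphOfSurjective
    (pointClosure_surjective hG hgen)

end PointClosure

section KSets

variable {K : (Y : Type u) → TopologicalSpace Y → Prop} {X : Type u} [TopologicalSpace X]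

theorem isKSet_of_isGenericPoint_closure
    (hT0 : ∀ (Y : Type u) (tY : TopologicalSpace Y), K Y tY → @T0Space Y tY)
    {A : Set X} {x : X} (hx : IsGenericPoint x (closure A)) : IsKSet K X A := by
  intro Y tY hY f hf
  have : T0Space Y := hT0 Y tY hY
  have hfx : IsGenericPoint (f x) (closure (f '' A)) :=
    isGenericPoint_closure_image_of_closure hx hf
  exact ⟨f x, hfx.symm, fun _ hy => IsGenericPoint.eq hy.symm hfx⟩

theorem closure_singleton_mem_kSets
    (hT0 : ∀ (Y : Type u) (tY : TopologicalSpace Y), K Y tY → @T0Space Y tY) (x : X) :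
    closure {x} ∈ KSets K X :=
  ⟨isClosed_closure, isKSet_of_isGenericPoint_closure hT0 closure_closure.symm⟩

theorem Adequate.of_forall_mem_kSets_exists_isGenericPoint [T0Space X] (hAdeq : Adequate K)
    (hT0 : ∀ (Y : Type u) (tY : TopologicalSpace Y), K Y tY → @T0Space Y tY)
    (hHomeo : ∀ (Y : Type u) (tY : TopologicalSpace Y) (Z : Type u) (tZ : TopologicalSpace Z),
      K Y tY → Nonempty (@Homeomorph Y Z tY tZ) → K Z tZ)
    (hgen : ∀ A ∈ KSets K X, ∃ x, IsGenericPoint x A) : K X inferInstance :=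
  hHomeo _ _ _ _ (hAdeq X _ inferInstance)
    ⟨(pointClosureHomeomorph (closure_singleton_mem_kSets hT0) hgen).symm⟩

theorem exists_isGenericPoint_of_mem_kSets_equalizer (hX : K X inferInstance)
    {Y : Type*} [TopologicalSpace Y] [T0Space Y] {f g : X → Y} (hf : Continuous f)
    (hg : Continuous g) {A : Set {x : X // f x = g x}} (hA : A ∈ KSets K {x : X // f x = g x}) :
    ∃ e, IsGenericPoint e A := by
  obtain ⟨hA_closed, hA_kSet⟩ := hA
  obtain ⟨x, hx, -⟩ := hA_kSet X _ hX Subtype.val continuous_subtype_val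
  have hfg : (Subtype.val '' A).EqOn f g := by
    rintro _ ⟨e, -, rfl⟩
    exact e.2
  have hfx : f x = g x := eq_of_eqOn_of_isGenericPoint_closure hf hg hfg hx.symm
  have he : IsGenericPoint (⟨x, hfx⟩ : {x : X // f x = g x}) (closure A) :=
    isGenericPoint_closure_of_isInducing IsInducing.subtypeVal hx.symm
  exact ⟨⟨x, hfx⟩, hA_closed.closure_eq ▸ he⟩

end KSets

end LowerVietoris

theorem stmt4_general
    (K : (Y : Type u) → TopologicalSpace Y → Prop)
    (hT0 : ∀ (Y : Type u) (tY : TopologicalSpace Y), K Y tY → @T0Space Y tY)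
    (hHomeo : ∀ (Y : Type u) (tY : TopologicalSpace Y) (Z : Type u) (tZ : TopologicalSpace Z),
      K Y tY → Nonempty (@Homeomorph Y Z tY tZ) → K Z tZ)
    (hAdeq : Adequate K)
    (X : Type u) [tX : TopologicalSpace X] (hX : K X tX)
    (Y : Type v) [tY : TopologicalSpace Y] [T0Space Y]
    (f g : X → Y) (hf : Continuous f) (hg : Continuous g) :
    K {x : X // f x = g x} inferInstance := by
  have : T0Space X := hT0 X tX hX
  exact hAdeq.of_forall_mem_kSets_exists_isGenericPoint hT0 hHomeo
    fun _ hA => exists_isGenericPoint_of_mem_kSets_equalizer hX hf hg hA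

/-- If `K` is an adequate class of T0 spaces containing all sober spaces,
closed under homeomorphisms and contained in the d-spaces, then the equalizer of two
continuous maps from a `𝐊`-space to a T0 space is a `𝐊`-space. -/
theorem stmt4
    (K : (Y : Type u) → TopologicalSpace Y → Prop)
    (hT0 : ∀ (Y : Type u) (tY : TopologicalSpace Y), K Y tY → @T0Space Y tY)
    (hSober : ∀ (Y : Type u) (tY : TopologicalSpace Y), @Sober Y tY → K Y tY)
    (hHomeo : ∀ (Y : Type u) (tY : TopologicalSpace Y) (Z : Type u) (tZ : TopologicalSpace Z),
      K Y tY → Nonempty (@Homeomorph Y Z tY tZ) → K Z tZ)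
    (hD : ∀ (Y : Type u) (tY : TopologicalSpace Y), K Y tY → @DSpace Y tY)
    (hAdeq : Adequate K)
    (X : Type u) [tX : TopologicalSpace X] (hX : K X tX)
    (Y : Type u) [tY : TopologicalSpace Y] [T0Space Y]
    (f g : X → Y) (hf : Continuous f) (hg : Continuous g) :
    K {x : X // f x = g x} inferInstance :=
  stmt4_general K hT0 hHomeo hAdeq X hX Y f g hf hg
end

section
/- Let 𝐊 be a class of T0 topological spaces such that: every sober space is a 𝐊-space; any space homeomorphic to a 𝐊-space is a 𝐊-space; every 𝐊-space is a d-space; and 𝐊 is adequate. Then the property of being a 𝐊-space is closed-hereditary and saturated-hereditary: if X is a 𝐊-space, then every closed subset of X and every saturated subset of X, equipped with the subspace topology, is a 𝐊-space. -/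
universe u v

open Set

/-!
By adequacy, a `T0` space `S` is a `𝐊`-space as soon as all its closed `𝐊`-sets are point closures,
because `x ↦ cl {x}` is then a homeomorphism from `S` onto `P_H(𝐊(S))`. If `A` is a subspace of a
`𝐊`-space `X` and `B ⊆ A` is a closed `𝐊`-set of `A`, testing `B` against the inclusion `A → X`
yields a point `x` of `X` with `cl B = cl {x}`. Every neighbourhood of `x` meets `A ∩ cl {x}`, so
`x` lies in the closure of `A` for the Skula topology. Closed sets and saturated sets are Skula
closed, and for Skula closed `A` this puts `x` in `A`, where it generates `B`.
-/

open Topology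

section Skula

variable {X : Type*} [TopologicalSpace X]

/-- The Skula topology (or `b`-topology), generated by the open sets and the closed sets of a space.
It treats the two cases at once: closed sets and saturated sets are both closed in it. -/
abbrev skulaTopology (X : Type*) [tX : TopologicalSpace X] : TopologicalSpace X :=
  tX ⊓ TopologicalSpace.generateFrom {F : Set X | IsClosed F}

theorem nhds_skulaTopology (x : X) : @nhds X (skulaTopology X) x = 𝓝[closure {x}] x := by
  rw [skulaTopology, nhds_inf, TopologicalSpace.nhds_generateFrom]
  refine congrArg (𝓝 x ⊓ ·) (le_antisymm ?_ ?_)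
  · exact iInf₂_le (closure {x}) ⟨subset_closure rfl, isClosed_closure⟩
  · refine le_iInf₂ fun F ⟨hxF, hF⟩ => Filter.principal_mono.mpr ?_
    exact closure_minimal (singleton_subset_iff.mpr hxF) hF

theorem isClosed_skulaTopology_of_isClosed {A : Set X} (hA : IsClosed A) :
    IsClosed[skulaTopology X] A :=
  hA.mono inf_le_left

theorem isClosed_skulaTopology_of_isOpen {A : Set X} (hA : IsOpen A) :
    IsClosed[skulaTopology X] A :=
  (@isOpen_compl_iff X A (skulaTopology X)).mp <|
    (inf_le_right : skulaTopology X ≤ TopologicalSpace.generateFrom {F : Set X | IsClosed F})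
      Aᶜ (TopologicalSpace.isOpen_generateFrom_of_mem hA.isClosed_compl)

theorem isClosed_skulaTopology_of_saturated {A : Set X} (hA : Saturated A) :
    IsClosed[skulaTopology X] A := by
  obtain ⟨𝒰, h𝒰, rfl⟩ := hA
  exact @isClosed_sInter X (skulaTopology X) 𝒰 fun U hU =>
    isClosed_skulaTopology_of_isOpen (h𝒰 U hU)

theorem mem_of_isClosed_skulaTopology {A B : Set X} (hA : IsClosed[skulaTopology X] A)
    (hBA : B ⊆ A) {x : X} (hx : closure B = closure {x}) : x ∈ A := by
  refine (@isClosed_iff_frequently X (skulaTopology X) A).mp hA x ?_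
  rw [nhds_skulaTopology, frequently_nhdsWithin_iff]
  have hxB : x ∈ closure B := hx ▸ subset_closure rfl
  exact (mem_closure_iff_frequently.mp hxB).mono fun y hy => ⟨hBA hy, hx ▸ subset_closure hy⟩

theorem exists_closure_singleton_eq_of_isClosed_skulaTopology {A : Set X}
    (hA : IsClosed[skulaTopology X] A) {B : Set A} {x : X}
    (hx : closure (Subtype.val '' B) = closure {x}) : ∃ a : A, closure {a} = closure B := by
  have hxA : x ∈ A := mem_of_isClosed_skulaTopology hA (Subtype.coe_image_subset A B) hx
  refine ⟨⟨x, hxA⟩, ?_⟩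
  rw [IsInducing.subtypeVal.closure_eq_preimage_closure_image, image_singleton, ← hx,
    ← IsInducing.subtypeVal.closure_eq_preimage_closure_image]

end Skula

section PointClosures

/-- The family of point closures of `X`. For a `T0` space it is a copy of `X` in the lower Vietoris
topology, and `X` is a `𝐊`-space as soon as it exhausts `𝐊(X)`. -/
def pointClosures (X : Type*) [TopologicalSpace X] : Set (Set X) :=
  range fun x : X => closure {x}

theorem isInducing_rangeFactorization_closure_singleton (X : Type*) [TopologicalSpace X] :
    @IsInducing X (pointClosures X) _ (lowerVietoris (pointClosures X))
      (rangeFactorization fun x : X => closure {x}) := by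
  let _ := lowerVietoris (pointClosures X)
  have preimage_diamond {U : Set X} (hU : IsOpen U) :
      (rangeFactorization fun x : X => closure {x}) ⁻¹'
        {A : pointClosures X | ((A : Set X) ∩ U).Nonempty} = U := by
    ext x
    exact (closure_inter_open_nonempty_iff hU).trans singleton_inter_nonempty
  refine ⟨le_antisymm ?_ fun U hU => ?_⟩
  · refine continuous_iff_le_induced.mp (continuous_generateFrom_iff.mpr ?_)
    rintro _ ⟨U, hU, rfl⟩
    exact (preimage_diamond hU).symm ▸ hU
  · exact ⟨_, TopologicalSpace.isOpen_generateFrom_of_mem ⟨U, hU, rfl⟩, preimage_diamond hU⟩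

theorem nonempty_homeomorph_pointClosures (X : Type*) [tX : TopologicalSpace X] [T0Space X] :
    Nonempty (@Homeomorph (pointClosures X) X (lowerVietoris (pointClosures X)) tX) := by
  let _ := lowerVietoris (pointClosures X)
  have closure_singleton_injective : Function.Injective fun x : X => closure {x} :=
    fun _ _ h => (inseparable_iff_closure_eq.mpr h).eq
  let pointClosure : X ≃ pointClosures X := Equiv.ofInjective _ closure_singleton_injective
  exact ⟨(pointClosure.toHomeomorphOfIsInducing
    (isInducing_rangeFactorization_closure_singleton X)).symm⟩

end PointClosures

section KSpaces

variable {K : (Y : Type u) → TopologicalSpace Y → Prop}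

theorem isKSet_closure_singleton
    (hT0 : ∀ (Y : Type u) (tY : TopologicalSpace Y), K Y tY → @T0Space Y tY)
    {X : Type u} [TopologicalSpace X] (x : X) : IsKSet K X (closure {x}) := by
  intro Y tY hY f hf
  have := hT0 Y tY hY
  have closure_image : closure (f '' closure {x}) = closure {f x} := by
    rw [closure_image_closure hf, image_singleton]
  exact ⟨f x, closure_image, fun y hy =>
    (inseparable_iff_closure_eq.mpr (hy.symm.trans closure_image)).eq⟩

theorem pointClosures_subset_kSets
    (hT0 : ∀ (Y : Type u) (tY : TopologicalSpace Y), K Y tY → @T0Space Y tY)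
    (X : Type u) [TopologicalSpace X] : pointClosures X ⊆ KSets K X :=
  range_subset_iff.mpr fun x => ⟨isClosed_closure, isKSet_closure_singleton hT0 x⟩

theorem kSpace_of_kSets_subset_pointClosures
    (hT0 : ∀ (Y : Type u) (tY : TopologicalSpace Y), K Y tY → @T0Space Y tY)
    (hHomeo : ∀ (Y : Type u) (tY : TopologicalSpace Y) (Z : Type u) (tZ : TopologicalSpace Z),
      K Y tY → Nonempty (@Homeomorph Y Z tY tZ) → K Z tZ)
    (hAdeq : Adequate K) {S : Type u} [tS : TopologicalSpace S] [hS : T0Space S]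
    (h : KSets K S ⊆ pointClosures S) : K S tS := by
  have kSets_eq : KSets K S = pointClosures S := h.antisymm (pointClosures_subset_kSets hT0 S)
  have hKSets : K (KSets K S) (lowerVietoris (KSets K S)) := hAdeq S tS hS
  rw [kSets_eq] at hKSets
  exact hHomeo _ _ S tS hKSets (nonempty_homeomorph_pointClosures S)

theorem kSets_subset_pointClosures_of_isClosed_skulaTopology
    {X : Type u} [tX : TopologicalSpace X] (hX : K X tX) {A : Set X}
    (hA : IsClosed[skulaTopology X] A) : KSets K A ⊆ pointClosures A := by
  rintro B ⟨hB, hBK⟩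
  obtain ⟨x, hx, -⟩ := hBK X tX hX Subtype.val continuous_subtype_val
  obtain ⟨a, ha⟩ := exists_closure_singleton_eq_of_isClosed_skulaTopology hA hx
  exact ⟨a, ha.trans hB.closure_eq⟩

end KSpaces

theorem stmt6_general
    (K : (Y : Type u) → TopologicalSpace Y → Prop)
    (hT0 : ∀ (Y : Type u) (tY : TopologicalSpace Y), K Y tY → @T0Space Y tY)
    (hHomeo : ∀ (Y : Type u) (tY : TopologicalSpace Y) (Z : Type u) (tZ : TopologicalSpace Z),
      K Y tY → Nonempty (@Homeomorph Y Z tY tZ) → K Z tZ)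
    (hAdeq : Adequate K)
    (X : Type u) [tX : TopologicalSpace X] (hX : K X tX)
    (A : Set X) (hA : IsClosed[skulaTopology X] A) :
    K ↥A inferInstance := by
  have := hT0 X tX hX
  exact kSpace_of_kSets_subset_pointClosures hT0 hHomeo hAdeq
    (kSets_subset_pointClosures_of_isClosed_skulaTopology hX hA)

/-- If `K` is an adequate class of T0 spaces containing all sober spaces,
closed under homeomorphisms and contained in the d-spaces, then the property of being a
`𝐊`-space is closed-hereditary and saturated-hereditary. -/
theorem stmt6
    (K : (Y : Type u) → TopologicalSpace Y → Prop)
    (hT0 : ∀ (Y : Type u) (tY : TopologicalSpace Y), K Y tY → @T0Space Y tY)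
    (hSober : ∀ (Y : Type u) (tY : TopologicalSpace Y), @Sober Y tY → K Y tY)
    (hHomeo : ∀ (Y : Type u) (tY : TopologicalSpace Y) (Z : Type u) (tZ : TopologicalSpace Z),
      K Y tY → Nonempty (@Homeomorph Y Z tY tZ) → K Z tZ)
    (hD : ∀ (Y : Type u) (tY : TopologicalSpace Y), K Y tY → @DSpace Y tY)
    (hAdeq : Adequate K)
    (X : Type u) [tX : TopologicalSpace X] (hX : K X tX) :
    (∀ C : Set X, IsClosed C → K ↥C inferInstance) ∧
    (∀ A : Set X, Saturated A → K ↥A inferInstance) := by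
  have skula := stmt6_general K hT0 hHomeo hAdeq X hX
  exact ⟨fun C hC => skula C (isClosed_skulaTopology_of_isClosed hC),
    fun A hA => skula A (isClosed_skulaTopology_of_saturated hA)⟩
end
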